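/- Let R be a finite subgroup of O(3) with R not contained in SO(3), and suppose pr(R) is conjugate in O(3) to the icosahedral group I. Then R is conjugate in O(3) to I × Z = {±g : g ∈ I}. -/

import Mathlib

/-! The statement is invariant under conjugation, so one may assume `pr(R) = I`; then every
`g ∈ I` satisfies `g ∈ R` or `-g ∈ R`, and everything reduces to `-1 ∈ R`: granting this,
`R = {±g : g ∈ I}` at once.

Suppose `-1 ∉ R`. If `h ∈ I` has odd order and `-h ∈ R`, then an odd power of `-h` is `-1`, which is
impossible; so all elements of `I` of odd order lie in `R` (`mem_of_pow`). The group `I` is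
generated by such elements, so `I ⊆ R` (`icosa_subset`). But `R` contains some `A` of determinant
`-1`; then `-A = pr A ∈ I ⊆ R`, and `(-A) Aᵀ = -1 ∈ R`, a contradiction. In other words, `I` has no
subgroup of index two, and `-1 ∈ R` because `R ∩ SO(3)` would otherwise be one.

For the generation, the order-three elements (the cyclic permutation `cyc` of the coordinates and
its conjugates) generate the tetrahedral group, which contains the diagonal sign matrices and is
transitive on the twelve vertices. The stabilizer of the vertex `(0, 1, φ)` permutes its five
neighbours, and the order-five rotation `rot` permutes them cyclically. Finally, a rotation fixing
`(0, 1, φ)` and its neighbour `(0, -1, φ)` is the identity. -/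


/-! Setup: `O(3)` is the group of 3×3 real orthogonal matrices, `SO(3)` the subgroup of
determinant-one matrices, and `pr : O(3) → SO(3)`, `A ↦ det A · A` (kernel `Z = {±1}`).
Subgroups of `O(3)` are modelled as subsets of the matrix ring that contain `1`, are
closed under multiplication and under transpose (which is the inverse in `O(3)`). -/

noncomputable section
open Matrix

abbrev M3 : Type := Matrix (Fin 3) (Fin 3) ℝ

/-- The set of orthogonal 3×3 real matrices. -/
def O3 : Set M3 := {A : M3 | A * Aᵀ = 1 ∧ Aᵀ * A = 1}

/-- The set of special orthogonal 3×3 real matrices. -/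
def SO3 : Set M3 := {A : M3 | A ∈ O3 ∧ A.det = 1}

/-- `R` is a subgroup of `O(3)` (inverses in `O(3)` are transposes). -/
structure IsSubgroupO3 (R : Set M3) : Prop where
  subset_O3 : R ⊆ O3
  one_mem : (1 : M3) ∈ R
  mul_mem : ∀ ⦃A B : M3⦄, A ∈ R → B ∈ R → A * B ∈ R
  transpose_mem : ∀ ⦃A : M3⦄, A ∈ R → Aᵀ ∈ R

/-- The homomorphism `pr : O(3) → SO(3)`, `A ↦ det A • A`. -/
def pr (A : M3) : M3 := A.det • A

/-- The image `pr(R)`. -/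
def prS (R : Set M3) : Set M3 := pr '' R

/-- Two subsets of `O(3)` are conjugate in `O(3)`. -/
def ConjO3 (R S : Set M3) : Prop := ∃ P ∈ O3, S = (fun A => P * A * Pᵀ) '' R

/-- The subgroup of `O(3)` generated by a subset.  (For subsets of `O(3)` that are closed
under inverses -- in particular finite-order generators or inverse-closed sets -- the
submonoid closure coincides with the generated subgroup.) -/
def gen (S : Set M3) : Set M3 := (Submonoid.closure S : Set M3)

/-- `K × Z = {±g : g ∈ K}`, the internal direct product with the center `Z = {1, -1}`. -/
def prodZ (K : Set M3) : Set M3 := K ∪ (fun A : M3 => -A) '' K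

/-- The rotation through angle `θ` around the `z`-axis. -/
def rotZ (θ : ℝ) : M3 :=
  !![Real.cos θ, -Real.sin θ, 0; Real.sin θ, Real.cos θ, 0; 0, 0, 1]

/-- `a_n`: the rotation through `2π/n` around the `z`-axis. -/
def aRot (n : ℕ) : M3 := rotZ (2 * Real.pi / n)

/-- `b`: the rotation through `π` around the `x`-axis. -/
def bRot : M3 := !![1, 0, 0; 0, -1, 0; 0, 0, -1]

/-- `Z_n = ⟨a_n⟩`. -/
def cyclicZ (n : ℕ) : Set M3 := gen {aRot n}

/-- `D_n = ⟨a_n, b⟩`. -/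
def dihedralD (n : ℕ) : Set M3 := gen {aRot n, bRot}

/-- The golden ratio `φ = (1 + √5)/2`. -/
def icoPhi : ℝ := (1 + Real.sqrt 5) / 2

/-- The vertex set of a regular icosahedron centered at the origin:
`(0, ±1, ±φ)`, `(±1, ±φ, 0)`, `(±φ, 0, ±1)`. -/
def vI : Set (Fin 3 → ℝ) :=
  {![0, 1, icoPhi], ![0, 1, -icoPhi], ![0, -1, icoPhi], ![0, -1, -icoPhi],
   ![1, icoPhi, 0], ![1, -icoPhi, 0], ![-1, icoPhi, 0], ![-1, -icoPhi, 0],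
   ![icoPhi, 0, 1], ![icoPhi, 0, -1], ![-icoPhi, 0, 1], ![-icoPhi, 0, -1]}

/-- The icosahedral group `I`. -/
def icosa : Set M3 := {g : M3 | g ∈ SO3 ∧ (fun v => g.mulVec v) '' vI = vI}

/-! ### The golden ratio and the generators of the icosahedral group -/

lemma phi_sq : icoPhi * icoPhi = icoPhi + 1 := by
  have h : Real.sqrt 5 * Real.sqrt 5 = 5 := Real.mul_self_sqrt (by norm_num)
  unfold icoPhi
  linear_combination h / 4

lemma phi_gt : 1 < icoPhi := by
  have h : (1 : ℝ) < Real.sqrt 5 := by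
    rw [Real.lt_sqrt] <;> norm_num
  unfold icoPhi
  linarith

/-- The cyclic permutation `(x, y, z) ↦ (y, z, x)` of the coordinates. -/
def cyc : M3 := !![0, 1, 0; 0, 0, 1; 1, 0, 0]

/-- The half-turn around the `x`-axis. -/
def dx : M3 := !![1, 0, 0; 0, -1, 0; 0, 0, -1]

/-- The half-turn around the `y`-axis. -/
def dy : M3 := !![-1, 0, 0; 0, 1, 0; 0, 0, -1]

/-- The half-turn around the `z`-axis. -/
def dz : M3 := !![-1, 0, 0; 0, -1, 0; 0, 0, 1]

/-- The rotation through `2π/5` around the vertex `(0, 1, φ)`, determined by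
`(0, -1, φ) ↦ (φ, 0, 1) ↦ (1, φ, 0)`. -/
def rot : M3 :=
  !![(icoPhi - 1) / 2, -icoPhi / 2, 1 / 2;
     icoPhi / 2, 1 / 2, (icoPhi - 1) / 2;
     -1 / 2, (icoPhi - 1) / 2, icoPhi / 2]

/-! ### Orthogonal matrices and the icosahedral group -/

lemma det_mul_self {A : M3} (hA : A ∈ O3) : A.det * A.det = 1 := by
  have := congrArg Matrix.det hA.1
  simpa using this

lemma det_cases {A : M3} (hA : A ∈ O3) : A.det = 1 ∨ A.det = -1 :=
  mul_self_eq_one_iff.mp (det_mul_self hA)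

lemma mulVec_injective {A : M3} (hA : A ∈ O3) : Function.Injective (fun v => A.mulVec v) := by
  intro v w h
  have h2 := congrArg (fun u => Aᵀ.mulVec u) h
  simpa [Matrix.mulVec_mulVec, hA.2] using h2

lemma vI_finite : vI.Finite := by
  unfold vI
  exact Set.toFinite _

/-- Since `vI` is finite, a rotation mapping `vI` into itself maps it onto itself. -/
lemma mem_icosa {A : M3} (hA : A ∈ SO3) (h : ∀ v ∈ vI, A.mulVec v ∈ vI) : A ∈ icosa := by
  refine ⟨hA, ?_⟩
  refine Set.eq_of_subset_of_ncard_le (Set.image_subset_iff.mpr h) ?_ vI_finite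
  rw [Set.ncard_image_of_injective _ (mulVec_injective hA.1)]

lemma icosa_maps {A : M3} (hA : A ∈ icosa) {v : Fin 3 → ℝ} (hv : v ∈ vI) : A.mulVec v ∈ vI := by
  rw [← hA.2]
  exact ⟨v, hv, rfl⟩

lemma SO3_mul {A B : M3} (hA : A ∈ SO3) (hB : B ∈ SO3) : A * B ∈ SO3 := by
  refine ⟨⟨?_, ?_⟩, by rw [Matrix.det_mul, hA.2, hB.2, one_mul]⟩
  · rw [Matrix.transpose_mul, mul_assoc, ← mul_assoc B, hB.1.1, one_mul, hA.1.1]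
  · rw [Matrix.transpose_mul, mul_assoc, ← mul_assoc Aᵀ, hA.1.2, one_mul, hB.1.2]

lemma icosa_mul {A B : M3} (hA : A ∈ icosa) (hB : B ∈ icosa) : A * B ∈ icosa := by
  refine mem_icosa (SO3_mul hA.1 hB.1) fun v hv => ?_
  rw [← Matrix.mulVec_mulVec]
  exact icosa_maps hA (icosa_maps hB hv)

/-! ### The generators as symmetries of the icosahedron -/

lemma cyc_mulVec (a b c : ℝ) : cyc.mulVec ![a, b, c] = ![b, c, a] := by
  ext i; fin_cases i <;> simp [cyc]

lemma dx_mulVec (a b c : ℝ) : dx.mulVec ![a, b, c] = ![a, -b, -c] := by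
  ext i; fin_cases i <;> simp [dx]

lemma dy_mulVec (a b c : ℝ) : dy.mulVec ![a, b, c] = ![-a, b, -c] := by
  ext i; fin_cases i <;> simp [dy]

lemma dz_mulVec (a b c : ℝ) : dz.mulVec ![a, b, c] = ![-a, -b, c] := by
  ext i; fin_cases i <;> simp [dz]

lemma rot_mulVec (a b c : ℝ) : rot.mulVec ![a, b, c] =
    ![(icoPhi - 1) / 2 * a - icoPhi / 2 * b + c / 2,
      icoPhi / 2 * a + b / 2 + (icoPhi - 1) / 2 * c,
      -a / 2 + (icoPhi - 1) / 2 * b + icoPhi / 2 * c] := by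
  ext i; fin_cases i <;> simp [rot, Matrix.mulVec, dotProduct, Fin.sum_univ_three] <;> ring

/-- The action of `rot` on the vertices: it fixes `±(0, 1, φ)` and cycles the two sets of five
remaining vertices. -/
lemma rot_vertices :
    rot.mulVec ![0, 1, icoPhi] = ![0, 1, icoPhi] ∧
    rot.mulVec ![0, -1, icoPhi] = ![icoPhi, 0, 1] ∧
    rot.mulVec ![icoPhi, 0, 1] = ![1, icoPhi, 0] ∧
    rot.mulVec ![1, icoPhi, 0] = ![-1, icoPhi, 0] ∧
    rot.mulVec ![-1, icoPhi, 0] = ![-icoPhi, 0, 1] ∧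
    rot.mulVec ![-icoPhi, 0, 1] = ![0, -1, icoPhi] ∧
    rot.mulVec ![0, -1, -icoPhi] = ![0, -1, -icoPhi] ∧
    rot.mulVec ![0, 1, -icoPhi] = ![-icoPhi, 0, -1] ∧
    rot.mulVec ![-icoPhi, 0, -1] = ![-1, -icoPhi, 0] ∧
    rot.mulVec ![-1, -icoPhi, 0] = ![1, -icoPhi, 0] ∧
    rot.mulVec ![1, -icoPhi, 0] = ![icoPhi, 0, -1] ∧
    rot.mulVec ![icoPhi, 0, -1] = ![0, 1, -icoPhi] := by
  have hp := phi_sq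
  simp only [rot_mulVec]
  refine ⟨?_, ?_, ?_, ?_, ?_, ?_, ?_, ?_, ?_, ?_, ?_, ?_⟩ <;>
  · ext i
    fin_cases i <;> simp <;> grind

lemma cyc_SO3 : cyc ∈ SO3 := by
  refine ⟨⟨?_, ?_⟩, by simp [cyc, Matrix.det_fin_three]⟩ <;>
  · ext i j
    fin_cases i <;> fin_cases j <;> simp [cyc, Matrix.mul_apply, Fin.sum_univ_three]

lemma dx_SO3 : dx ∈ SO3 := by
  refine ⟨⟨?_, ?_⟩, by simp [dx, Matrix.det_fin_three]⟩ <;>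
  · ext i j
    fin_cases i <;> fin_cases j <;> simp [dx, Matrix.mul_apply, Fin.sum_univ_three]

lemma rot_SO3 : rot ∈ SO3 := by
  have hp := phi_sq
  refine ⟨⟨?_, ?_⟩, by simp [rot, Matrix.det_fin_three]; grind⟩ <;>
  · ext i j
    fin_cases i <;> fin_cases j <;> simp [rot, Matrix.mul_apply, Fin.sum_univ_three] <;> grind

lemma dy_SO3 : dy ∈ SO3 := by
  refine ⟨⟨?_, ?_⟩, by simp [dy, Matrix.det_fin_three]⟩ <;>
  · ext i j
    fin_cases i <;> fin_cases j <;> simp [dy, Matrix.mul_apply, Fin.sum_univ_three]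

lemma dz_SO3 : dz ∈ SO3 := by
  refine ⟨⟨?_, ?_⟩, by simp [dz, Matrix.det_fin_three]⟩ <;>
  · ext i j
    fin_cases i <;> fin_cases j <;> simp [dz, Matrix.mul_apply, Fin.sum_univ_three]

lemma cyc_icosa : cyc ∈ icosa := by
  refine mem_icosa cyc_SO3 fun v hv => ?_
  simp only [vI, Set.mem_insert_iff, Set.mem_singleton_iff] at hv
  rcases hv with rfl | rfl | rfl | rfl | rfl | rfl | rfl | rfl | rfl | rfl | rfl | rfl <;>
    rw [cyc_mulVec] <;> simp [vI]

lemma dx_icosa : dx ∈ icosa := by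
  refine mem_icosa dx_SO3 fun v hv => ?_
  simp only [vI, Set.mem_insert_iff, Set.mem_singleton_iff] at hv
  rcases hv with rfl | rfl | rfl | rfl | rfl | rfl | rfl | rfl | rfl | rfl | rfl | rfl <;>
    rw [dx_mulVec] <;> simp [vI]

lemma dy_icosa : dy ∈ icosa := by
  refine mem_icosa dy_SO3 fun v hv => ?_
  simp only [vI, Set.mem_insert_iff, Set.mem_singleton_iff] at hv
  rcases hv with rfl | rfl | rfl | rfl | rfl | rfl | rfl | rfl | rfl | rfl | rfl | rfl <;>
    rw [dy_mulVec] <;> simp [vI]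

lemma dz_icosa : dz ∈ icosa := by
  refine mem_icosa dz_SO3 fun v hv => ?_
  simp only [vI, Set.mem_insert_iff, Set.mem_singleton_iff] at hv
  rcases hv with rfl | rfl | rfl | rfl | rfl | rfl | rfl | rfl | rfl | rfl | rfl | rfl <;>
    rw [dz_mulVec] <;> simp [vI]

lemma rot_icosa : rot ∈ icosa := by
  refine mem_icosa rot_SO3 fun v hv => ?_
  obtain ⟨h1, h2, h3, h4, h5, h6, h7, h8, h9, h10, h11, h12⟩ := rot_vertices
  simp only [vI, Set.mem_insert_iff, Set.mem_singleton_iff] at hv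
  rcases hv with rfl | rfl | rfl | rfl | rfl | rfl | rfl | rfl | rfl | rfl | rfl | rfl <;>
    simp only [h1, h2, h3, h4, h5, h6, h7, h8, h9, h10, h11, h12] <;> simp [vI]

lemma cyc_pow : cyc ^ 3 = 1 := by
  ext i j
  fin_cases i <;> fin_cases j <;> simp [cyc, pow_succ, Matrix.mul_apply, Fin.sum_univ_three]

lemma dx_mul_dx : dx * dx = 1 := by
  ext i j
  fin_cases i <;> fin_cases j <;> simp [dx, Matrix.mul_apply, Fin.sum_univ_three]

/-! ### Stabilizers -/

/-- A rotation fixing the adjacent vertices `(0, 1, φ)` and `(0, -1, φ)` is the identity. -/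
lemma eq_one_of_fix {g : M3} (hg : g ∈ SO3) (hv : g.mulVec ![0, 1, icoPhi] = ![0, 1, icoPhi])
    (hw : g.mulVec ![0, -1, icoPhi] = ![0, -1, icoPhi]) : g = 1 := by
  have hp : icoPhi ≠ 0 := by linarith [phi_gt]
  have v (i) := congrFun hv i
  have w (i) := congrFun hw i
  simp only [Matrix.mulVec, dotProduct, Fin.sum_univ_three] at v w
  have v0 := v 0
  have v1 := v 1
  have v2 := v 2
  have w0 := w 0
  have w1 := w 1
  have w2 := w 2
  simp at v0 v1 v2 w0 w1 w2
  -- the second and third columns are read off from the difference and the sum of `v` and `w`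
  have a0 : g 0 1 = 0 := by linarith
  have a1 : g 1 1 = 1 := by linarith
  have a2 : g 2 1 = 0 := by linarith
  have b0 : g 0 2 = 0 := (mul_eq_zero.mp (by linarith)).resolve_right hp
  have b1 : g 1 2 = 0 := (mul_eq_zero.mp (by linarith)).resolve_right hp
  have b2 : g 2 2 = 1 := mul_right_cancel₀ hp (by linarith)
  -- the first column is orthogonal to the others, and the determinant fixes its first entry
  have o1 := congrFun (congrFun hg.1.2 0) 1
  have o2 := congrFun (congrFun hg.1.2 0) 2
  have hd := hg.2
  simp [Matrix.mul_apply, Fin.sum_univ_three, a0, a1, a2, b0, b1, b2] at o1 o2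
  simp [Matrix.det_fin_three, a0, a1, a2, b0, b1, b2] at hd
  ext i j
  fin_cases i <;> fin_cases j <;> simp [o1, o2, hd, a0, a1, a2, b0, b1, b2]

/-- A rotation of the icosahedron fixing the vertex `(0, 1, φ)` permutes its five neighbours, which
are singled out by their inner product `φ` with it. -/
lemma neighbour_cases {g : M3} (hg : g ∈ icosa)
    (hv : g.mulVec ![0, 1, icoPhi] = ![0, 1, icoPhi]) :
    g.mulVec ![0, -1, icoPhi] = ![0, -1, icoPhi] ∨
    g.mulVec ![0, -1, icoPhi] = ![icoPhi, 0, 1] ∨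
    g.mulVec ![0, -1, icoPhi] = ![1, icoPhi, 0] ∨
    g.mulVec ![0, -1, icoPhi] = ![-1, icoPhi, 0] ∨
    g.mulVec ![0, -1, icoPhi] = ![-icoPhi, 0, 1] := by
  have hp := phi_sq
  have hp1 := phi_gt
  have hdot : ![0, 1, icoPhi] ⬝ᵥ g.mulVec ![0, -1, icoPhi] = icoPhi := by
    conv_lhs => rw [← hv]
    rw [Matrix.dotProduct_mulVec, ← Matrix.mulVec_transpose, Matrix.mulVec_mulVec, hg.1.1.2,
      Matrix.one_mulVec]
    simp
    linarith
  have hmem : g.mulVec ![0, -1, icoPhi] ∈ vI := icosa_maps hg (by simp [vI])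
  generalize g.mulVec ![0, -1, icoPhi] = u at hdot hmem ⊢
  simp only [vI, Set.mem_insert_iff, Set.mem_singleton_iff] at hmem
  rcases hmem with rfl | rfl | rfl | rfl | rfl | rfl | rfl | rfl | rfl | rfl | rfl | rfl
  case inr.inr.inl => exact Or.inl rfl
  case inr.inr.inr.inr.inl => exact Or.inr (Or.inr (Or.inl rfl))
  case inr.inr.inr.inr.inr.inr.inl => exact Or.inr (Or.inr (Or.inr (Or.inl rfl)))
  case inr.inr.inr.inr.inr.inr.inr.inr.inl => exact Or.inr (Or.inl rfl)
  case inr.inr.inr.inr.inr.inr.inr.inr.inr.inr.inl =>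
    exact Or.inr (Or.inr (Or.inr (Or.inr rfl)))
  all_goals
    exfalso
    simp at hdot
    linarith

lemma rot_pow : rot ^ 5 = 1 := by
  obtain ⟨h1, h2, h3, h4, h5, h6, -⟩ := rot_vertices
  have hS : rot ^ 5 ∈ SO3 := by
    simp only [pow_succ, pow_zero, one_mul]
    exact SO3_mul (SO3_mul (SO3_mul (SO3_mul rot_SO3 rot_SO3) rot_SO3) rot_SO3) rot_SO3
  apply eq_one_of_fix hS <;>
    simp only [pow_succ, pow_zero, one_mul, ← Matrix.mulVec_mulVec, h1, h2, h3, h4, h5, h6]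

/-! ### Subgroups of `O(3)` projecting onto the icosahedral group -/

lemma pow_mem_of {R : Set M3} (hR : IsSubgroupO3 R) {A : M3} (hA : A ∈ R) (n : ℕ) : A ^ n ∈ R := by
  induction n with
  | zero => simpa using hR.one_mem
  | succ n ih => rw [pow_succ]; exact hR.mul_mem ih hA

lemma mem_of_mul {R : Set M3} (hR : IsSubgroupO3 R) {A B : M3} (hA : A ∈ R) (hAB : A * B ∈ R) : B ∈ R := by
  have := hR.mul_mem (hR.transpose_mem hA) hAB
  rwa [← mul_assoc, (hR.subset_O3 hA).2, one_mul] at this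

lemma mem_or_neg_mem {R : Set M3} (hR : IsSubgroupO3 R) (hpr : prS R = icosa) {g : M3} (hg : g ∈ icosa) : g ∈ R ∨ -g ∈ R := by
  rw [← hpr] at hg
  obtain ⟨A, hA, rfl⟩ := hg
  rcases det_cases (hR.subset_O3 hA) with h | h <;> simp [pr, h, hA]

lemma mem_of_pow {R : Set M3} (hR : IsSubgroupO3 R) (hpr : prS R = icosa)
    (hneg : (-1 : M3) ∉ R) {g : M3} (hg : g ∈ icosa) {n : ℕ} (hn : Odd n) (h : g ^ n = 1) : g ∈ R := by
  refine (mem_or_neg_mem hR hpr hg).resolve_right fun h' => hneg ?_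
  have := pow_mem_of hR h' n
  rwa [hn.neg_pow, h] at this

lemma cyc_mem {R : Set M3} (hR : IsSubgroupO3 R) (hpr : prS R = icosa)
    (hneg : (-1 : M3) ∉ R) : cyc ∈ R := mem_of_pow hR hpr hneg cyc_icosa (by decide : Odd 3) cyc_pow

lemma rot_mem {R : Set M3} (hR : IsSubgroupO3 R) (hpr : prS R = icosa)
    (hneg : (-1 : M3) ∉ R) : rot ∈ R := mem_of_pow hR hpr hneg rot_icosa (by decide : Odd 5) rot_pow

/-- `dy` is the product of the order-three elements `dx * cyc * dx` and `cyc⁻¹ = cyc * cyc`, and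
conjugation by `cyc` permutes the three half-turns. -/
lemma half_turns_mem {R : Set M3} (hR : IsSubgroupO3 R) (hpr : prS R = icosa)
    (hneg : (-1 : M3) ∉ R) : dx ∈ R ∧ dy ∈ R ∧ dz ∈ R := by
  have hc := cyc_mem hR hpr hneg
  have he : dx * cyc * dx ∈ R := by
    refine mem_of_pow hR hpr hneg (icosa_mul (icosa_mul dx_icosa cyc_icosa) dx_icosa)
      (by decide : Odd 3) ?_
    calc (dx * cyc * dx) ^ 3
        = dx * cyc * (dx * dx) * cyc * (dx * dx) * cyc * dx := by noncomm_ring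
      _ = dx * cyc ^ 3 * dx := by rw [dx_mul_dx]; noncomm_ring
      _ = 1 := by rw [cyc_pow, mul_one, dx_mul_dx]
  have hy : dy = (dx * cyc * dx) * (cyc * cyc) := by
    ext i j
    fin_cases i <;> fin_cases j <;>
      simp [dx, dy, cyc, Matrix.mul_apply, Fin.sum_univ_three]
  have hx : dx = cyc * dy * (cyc * cyc) := by
    ext i j
    fin_cases i <;> fin_cases j <;>
      simp [dx, dy, cyc, Matrix.mul_apply, Fin.sum_univ_three]
  have hz : dz = cyc * dx * (cyc * cyc) := by
    ext i j
    fin_cases i <;> fin_cases j <;>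
      simp [dx, dz, cyc, Matrix.mul_apply, Fin.sum_univ_three]
  have my : dy ∈ R := hy ▸ hR.mul_mem he (hR.mul_mem hc hc)
  have mx : dx ∈ R := hx ▸ hR.mul_mem (hR.mul_mem hc my) (hR.mul_mem hc hc)
  exact ⟨mx, my, hz ▸ hR.mul_mem (hR.mul_mem hc mx) (hR.mul_mem hc hc)⟩

lemma stabilizer_mem {R : Set M3} (hR : IsSubgroupO3 R) (hpr : prS R = icosa)
    (hneg : (-1 : M3) ∉ R) {g : M3} (hg : g ∈ icosa)
    (hv : g.mulVec ![0, 1, icoPhi] = ![0, 1, icoPhi]) : g ∈ R := by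
  obtain ⟨h1, h2, h3, h4, h5, h6, -⟩ := rot_vertices
  have hr (n : ℕ) : rot ^ n ∈ icosa ∧ (rot ^ n).mulVec ![0, 1, icoPhi] = ![0, 1, icoPhi] := by
    induction n with
    | zero =>
      rw [pow_zero]
      refine ⟨mem_icosa ⟨⟨by simp, by simp⟩, by simp⟩ fun v hv => ?_, Matrix.one_mulVec _⟩
      rwa [Matrix.one_mulVec]
    | succ n ih =>
      rw [pow_succ]
      exact ⟨icosa_mul ih.1 rot_icosa, by rw [← Matrix.mulVec_mulVec, h1, ih.2]⟩
  have key (n : ℕ)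
      (h : (rot ^ n).mulVec (g.mulVec ![0, -1, icoPhi]) = ![0, -1, icoPhi]) : g ∈ R := by
    refine mem_of_mul hR (pow_mem_of hR (rot_mem hR hpr hneg) n) ?_
    rw [eq_one_of_fix (SO3_mul (hr n).1.1 hg.1)
      (by rw [← Matrix.mulVec_mulVec, hv, (hr n).2]) (by rw [← Matrix.mulVec_mulVec, h])]
    exact hR.one_mem
  rcases neighbour_cases hg hv with h | h | h | h | h
  · exact key 0 (by rw [h, pow_zero, Matrix.one_mulVec])
  · exact key 4 (by simp only [h, pow_succ, pow_zero, one_mul, ← Matrix.mulVec_mulVec,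
      h3, h4, h5, h6])
  · exact key 3 (by simp only [h, pow_succ, pow_zero, one_mul, ← Matrix.mulVec_mulVec,
      h4, h5, h6])
  · exact key 2 (by simp only [h, pow_succ, pow_zero, one_mul, ← Matrix.mulVec_mulVec, h5, h6])
  · exact key 1 (by rw [h, pow_one, h6])

/-- If `-1 ∉ R` then `I ⊆ R`: a product of elements of odd order brings the image of `(0, 1, φ)`
back to `(0, 1, φ)`, which reduces the claim to the stabilizer of this vertex. -/
lemma icosa_subset {R : Set M3} (hR : IsSubgroupO3 R) (hpr : prS R = icosa)
    (hneg : (-1 : M3) ∉ R) {g : M3} (hg : g ∈ icosa) : g ∈ R := by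
  have hc := cyc_mem hR hpr hneg
  obtain ⟨mx, my, mz⟩ := half_turns_mem hR hpr hneg
  have red {t g : M3} (ht : t ∈ R) (hti : t ∈ icosa) (hg : g ∈ icosa)
      (h : t.mulVec (g.mulVec ![0, 1, icoPhi]) = ![0, 1, icoPhi]) : g ∈ R :=
    mem_of_mul hR ht (stabilizer_mem hR hpr hneg (icosa_mul hti hg)
      (by rw [← Matrix.mulVec_mulVec, h]))
  -- vertices in the plane `x = 0` are moved by half-turns
  have plane {g : M3} (hg : g ∈ icosa) (h : g.mulVec ![0, 1, icoPhi] = ![0, 1, icoPhi] ∨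
      g.mulVec ![0, 1, icoPhi] = ![0, 1, -icoPhi] ∨
      g.mulVec ![0, 1, icoPhi] = ![0, -1, icoPhi] ∨
      g.mulVec ![0, 1, icoPhi] = ![0, -1, -icoPhi]) : g ∈ R := by
    rcases h with h | h | h | h
    · exact stabilizer_mem hR hpr hneg hg h
    · exact red my dy_icosa hg (by rw [h, dy_mulVec]; simp)
    · exact red mz dz_icosa hg (by rw [h, dz_mulVec]; simp)
    · exact red mx dx_icosa hg (by rw [h, dx_mulVec]; simp)
  -- the other vertices are moved into that plane by `cyc` or its square
  have hmem : g.mulVec ![0, 1, icoPhi] ∈ vI := icosa_maps hg (by simp [vI])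
  simp only [vI, Set.mem_insert_iff, Set.mem_singleton_iff] at hmem
  rcases hmem with h | h | h | h | h | h | h | h | h | h | h | h
  iterate 4 exact plane hg (by simp [h])
  iterate 4
    refine mem_of_mul hR hc (mem_of_mul hR hc (plane (icosa_mul cyc_icosa
      (icosa_mul cyc_icosa hg)) ?_))
    simp only [← Matrix.mulVec_mulVec, h, cyc_mulVec]
    simp
  iterate 4
    refine mem_of_mul hR hc (plane (icosa_mul cyc_icosa hg) ?_)
    simp only [← Matrix.mulVec_mulVec, h, cyc_mulVec]
    simp

lemma neg_one_mem {R : Set M3} (hR : IsSubgroupO3 R) (hpr : prS R = icosa) (h : ¬ R ⊆ SO3) :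
    (-1 : M3) ∈ R := by
  by_contra hneg
  obtain ⟨A, hA, hA'⟩ := Set.not_subset.mp h
  have hO := hR.subset_O3 hA
  have hd : A.det = -1 := (det_cases hO).resolve_left fun h1 => hA' ⟨hO, h1⟩
  have hmem : pr A ∈ icosa := hpr ▸ ⟨A, hA, rfl⟩
  have h2 := hR.mul_mem (icosa_subset hR hpr hneg hmem) (hR.transpose_mem hA)
  rw [pr, hd, neg_one_smul, neg_mul, hO.1] at h2
  exact hneg h2

/-- The case of the theorem in which `pr(R)` is `I` itself. -/
lemma prodZ_eq {R : Set M3} (hR : IsSubgroupO3 R) (hpr : prS R = icosa) (h : ¬ R ⊆ SO3) :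
    prodZ icosa = R := by
  have h1 := neg_one_mem hR hpr h
  have hn {A : M3} (hA : A ∈ R) : -A ∈ R := by simpa using hR.mul_mem h1 hA
  have hsub {g : M3} (hg : g ∈ icosa) : g ∈ R :=
    (mem_or_neg_mem hR hpr hg).elim id fun h' => by simpa using hn h'
  ext A
  constructor
  · rintro (hA | ⟨B, hB, rfl⟩)
    · exact hsub hA
    · exact hn (hsub hB)
  · intro hA
    have hmem : pr A ∈ icosa := hpr ▸ ⟨A, hA, rfl⟩
    rcases det_cases (hR.subset_O3 hA) with hd | hd
    · exact Or.inl (by simpa [pr, hd] using hmem)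
    · exact Or.inr ⟨pr A, hmem, by simp [pr, hd]⟩

/-! ### Conjugation -/

lemma conj_mul_conj {P : M3} (hP : P ∈ O3) (A B : M3) :
    P * A * Pᵀ * (P * B * Pᵀ) = P * (A * B) * Pᵀ := by
  calc P * A * Pᵀ * (P * B * Pᵀ) = P * A * (Pᵀ * P) * B * Pᵀ := by noncomm_ring
    _ = P * (A * B) * Pᵀ := by rw [hP.2]; noncomm_ring

lemma conj_transpose (P A : M3) : (P * A * Pᵀ)ᵀ = P * Aᵀ * Pᵀ := by
  simp [Matrix.transpose_mul, mul_assoc]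

lemma conj_one {P : M3} (hP : P ∈ O3) : P * 1 * Pᵀ = 1 := by rw [mul_one, hP.1]

lemma conj_det {P : M3} (hP : P ∈ O3) (A : M3) : (P * A * Pᵀ).det = A.det := by
  simp only [Matrix.det_mul, Matrix.det_transpose]
  linear_combination A.det * det_mul_self hP

lemma conj_subgroup {P : M3} (hP : P ∈ O3) {R : Set M3} (hR : IsSubgroupO3 R) :
    IsSubgroupO3 ((fun A => P * A * Pᵀ) '' R) where
  subset_O3 := by
    rintro _ ⟨A, hA, rfl⟩
    have hO := hR.subset_O3 hA
    constructor
    · simp only [conj_transpose, conj_mul_conj hP, hO.1, conj_one hP]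
    · simp only [conj_transpose, conj_mul_conj hP, hO.2, conj_one hP]
  one_mem := ⟨1, hR.one_mem, conj_one hP⟩
  mul_mem := by
    rintro _ _ ⟨A, hA, rfl⟩ ⟨B, hB, rfl⟩
    exact ⟨A * B, hR.mul_mem hA hB, (conj_mul_conj hP A B).symm⟩
  transpose_mem := by
    rintro _ ⟨A, hA, rfl⟩
    exact ⟨Aᵀ, hR.transpose_mem hA, (conj_transpose P A).symm⟩

lemma conj_pr {P : M3} (hP : P ∈ O3) (A : M3) : pr (P * A * Pᵀ) = P * pr A * Pᵀ := by
  rw [pr, conj_det hP, pr, mul_smul_comm, smul_mul_assoc]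

/-- Let `R` be a finite subgroup of `O(3)` not contained in `SO(3)`,
and suppose `pr(R)` is conjugate in `O(3)` to the icosahedral group `I`.  Then `R` is
conjugate in `O(3)` to `I × Z = {±g : g ∈ I}`. -/
theorem statement5 (R : Set M3) (hR : IsSubgroupO3 R) (hfin : R.Finite)
    (hnotrot : ¬ R ⊆ SO3) (hconj : ConjO3 (prS R) icosa) :
    ConjO3 R (prodZ icosa) := by
  obtain ⟨P, hP, hI⟩ := hconj
  refine ⟨P, hP, prodZ_eq (conj_subgroup hP hR) ?_ fun hsub => hnotrot fun A hA => ?_⟩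
  · rw [hI, prS, prS, Set.image_image, Set.image_image]
    simp only [conj_pr hP]
  · refine ⟨hR.subset_O3 hA, ?_⟩
    rw [← conj_det hP]
    exact (hsub ⟨A, hA, rfl⟩).2
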